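/- Let p, q, r ∈ ℂ with 15p + 20q ≠ 0, set α = (3p² − 10q − 25r)/(15p + 20q), and suppose ζ, γ ∈ ℂ satisfy the linear relation (15p + 20q)·ζ + (15pα + 20q + 25r)·γ = −25rα + 15p² + 23pq together with the quadratic relation 10q·γ² + (15pζ − 15p²)·γ + 25rζ − 2q² − 20rp = 0. Then for EVERY d ∈ ℂ, setting a = (3pd + 4q)/5, b = αd + ζ, c = d + γ, and letting z₁, …, z₅ be the roots with multiplicity of X⁵ + pX² + qX + r over ℂ, the coefficient of Y³ in T(Y) = ∏ᵢ₌₁⁵ (Y + zᵢ⁴ + d·zᵢ³ + c·zᵢ² + b·zᵢ + a) is zero. -/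

import Mathlib

/-!
The sum of `g(z)` over the roots `z` of a monic `f` is a linear functional of the polynomial `g`; it
vanishes on multiples of `f`, and Newton's identities give its values on small powers of `X`. The
coefficient of `Y³` in `T` is the second elementary symmetric function of the values `wᵢ` of the
subsidiary quartic `g`, so `2 e₂(w) = (∑ g(zᵢ))² - ∑ g(zᵢ)²`. The choice of `a` kills the first sum;
the second is then a quadratic polynomial in `d`, whose three coefficients are, up to a common
constant factor, the relations imposed on `α`, `ζ` and `γ`.
-/

open Polynomial

/-- The Tschirnhaus transform `T(Y) = ∏ᵢ (Y + zᵢ⁴ + d·zᵢ³ + c·zᵢ² + b·zᵢ + a)`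
of a quintic with roots `z₁, …, z₅`, given by the quartic subsidiary
equation `z⁴ + dz³ + cz² + bz + a + y = 0`. -/
noncomputable def bringQuinticTransform (a b c d z₁ z₂ z₃ z₄ z₅ : ℂ) :
    Polynomial ℂ :=
  (X + C (z₁ ^ 4 + d * z₁ ^ 3 + c * z₁ ^ 2 + b * z₁ + a)) *
  (X + C (z₂ ^ 4 + d * z₂ ^ 3 + c * z₂ ^ 2 + b * z₂ + a)) *
  (X + C (z₃ ^ 4 + d * z₃ ^ 3 + c * z₃ ^ 2 + b * z₃ + a)) *
  (X + C (z₄ ^ 4 + d * z₄ ^ 3 + c * z₄ ^ 2 + b * z₄ + a)) *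
  (X + C (z₅ ^ 4 + d * z₅ ^ 3 + c * z₅ ^ 2 + b * z₅ + a))

section EvalSum

variable {R : Type*} [CommRing R]

/-- The linear functional `g ↦ ∑ g(z)` over the elements `z` of a multiset, counted with
multiplicity. Its value at `X ^ k` is the `k`-th power sum. -/
noncomputable def evalSum (s : Multiset R) : R[X] →ₗ[R] R where
  toFun g := (s.map fun z => g.eval z).sum
  map_add' g h := by simp
  map_smul' c g := by simp [Multiset.sum_map_mul_left]

theorem evalSum_apply (s : Multiset R) (g : R[X]) :
    evalSum s g = (s.map fun z => g.eval z).sum :=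
  rfl

theorem evalSum_one (s : Multiset R) : evalSum s 1 = s.card := by
  simp [evalSum_apply]

theorem evalSum_map_eval (s : Multiset R) (g h : R[X]) :
    evalSum (s.map fun z => g.eval z) h = evalSum s (h.comp g) := by
  simp [evalSum_apply]

theorem evalSum_prod_X_sub_C_mul (s : Multiset R) (g : R[X]) :
    evalSum s ((s.map fun z => X - C z).prod * g) = 0 := by
  refine Multiset.sum_eq_zero fun y hy => ?_
  obtain ⟨z, hz, rfl⟩ := Multiset.mem_map.mp hy
  have hroot : (s.map fun z => X - C z).prod.eval z = 0 :=
    eval_eq_zero_of_dvd_of_eval_eq_zero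
      (Multiset.dvd_prod (Multiset.mem_map_of_mem (fun z => X - C z) hz)) (by simp)
  rw [eval_mul, hroot, zero_mul]

theorem natCast_mul_esymm_eq_sum_evalSum (s : Multiset R) (k : ℕ) :
    k * s.esymm k = (-1) ^ (k + 1) *
      ∑ i ∈ Finset.range k, (-1) ^ i * s.esymm i * evalSum s (X ^ (k - i)) := by
  classical
  have evalSum_eq (j : ℕ) : ∑ x : s, (x : R) ^ j = evalSum s (X ^ j) := by
    simp only [evalSum_apply, eval_pow, eval_X]
    exact congrArg Multiset.sum (Multiset.map_univ s (· ^ j))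
  have range_eq : {i ∈ Finset.range (k + 1) | i < k} = Finset.range k := by
    ext i
    simp only [Finset.mem_filter, Finset.mem_range]
    lia
  have newton := congrArg (MvPolynomial.aeval fun x : s => (x : R))
    (MvPolynomial.mul_esymm_eq_sum s R k)
  rw [Finset.sum_filter, Finset.Nat.sum_antidiagonal_eq_sum_range_succ_mk, ← Finset.sum_filter,
    range_eq] at newton
  simpa only [map_mul, map_sum, map_pow, map_neg, map_one, map_natCast, MvPolynomial.psum,
    MvPolynomial.aeval_X, MvPolynomial.aeval_esymm_eq_multiset_esymm, Multiset.map_univ_coe,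
    evalSum_eq] using newton

theorem natCast_mul_coeff_prod_X_sub_C_eq_neg_sum (s : Multiset R) {k : ℕ} (hk : k ≤ s.card) :
    k * (s.map fun z => X - C z).prod.coeff (s.card - k) =
      -∑ i ∈ Finset.range k,
        (s.map fun z => X - C z).prod.coeff (s.card - i) * evalSum s (X ^ (k - i)) := by
  have coeff_eq (i : ℕ) (hi : i ≤ s.card) :
      (s.map fun z => X - C z).prod.coeff (s.card - i) = (-1) ^ i * s.esymm i := by
    rw [Multiset.prod_X_sub_C_coeff s (Nat.sub_le _ _), Nat.sub_sub_self hi]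
  have signs : (-1 : R) ^ k * (-1) ^ (k + 1) = -1 := by
    rw [← pow_add]
    exact Odd.neg_one_pow ⟨k, by ring⟩
  rw [coeff_eq k hk, mul_left_comm, natCast_mul_esymm_eq_sum_evalSum, ← mul_assoc, signs,
    neg_one_mul]
  congr 1
  refine Finset.sum_congr rfl fun i hi => ?_
  rw [coeff_eq i ((Finset.mem_range.mp hi).le.trans hk)]

theorem two_mul_esymm_two (s : Multiset R) :
    2 * s.esymm 2 = evalSum s X ^ 2 - evalSum s (X ^ 2) := by
  have esymm_zero : s.esymm 0 = 1 := by simp [Multiset.esymm]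
  have esymm_one : s.esymm 1 = evalSum s X := by
    simpa [esymm_zero] using natCast_mul_esymm_eq_sum_evalSum s 1
  have newton : 2 * s.esymm 2 = (-1) ^ 3 * (evalSum s (X ^ 2) - evalSum s X * evalSum s X) := by
    simpa [Finset.sum_range_succ, esymm_zero, esymm_one, sub_eq_add_neg] using
      natCast_mul_esymm_eq_sum_evalSum s 2
  linear_combination newton

end EvalSum

section TschirnhausTransform

variable {R : Type*} [CommRing R]

/-- The Tschirnhaus transform `∏ (Y + g(z))` of the polynomial with multiset of roots `s`
by the subsidiary equation `g(z) + y = 0`. -/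
noncomputable def tschirnhausTransform (s : Multiset R) (g : R[X]) : R[X] :=
  (s.map fun z => X + C (g.eval z)).prod

theorem two_mul_coeff_tschirnhausTransform {s : Multiset R} {n : ℕ} (hs : s.card = n + 2)
    (g : R[X]) :
    2 * (tschirnhausTransform s g).coeff n = evalSum s g ^ 2 - evalSum s (g ^ 2) := by
  have coeff_eq : (tschirnhausTransform s g).coeff n = (s.map fun z => g.eval z).esymm 2 := by
    rw [tschirnhausTransform, Multiset.prod_X_add_C_coeff' s _ (by lia), hs,
      Nat.add_sub_cancel_left]
  rw [coeff_eq, two_mul_esymm_two, evalSum_map_eval, evalSum_map_eval, X_comp, X_pow_comp]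

end TschirnhausTransform

/-- The principal quintic `X⁵ + pX² + qX + r`, the form to which a quadratic Tschirnhaus transform
reduces the general quintic. -/
noncomputable def principalQuintic {R : Type*} [CommRing R] (p q r : R) : R[X] :=
  X ^ 5 + C p * X ^ 2 + C q * X + C r

namespace principalQuintic

variable {R : Type*} [CommRing R]

theorem natDegree_eq_five [Nontrivial R] (p q r : R) : (principalQuintic p q r).natDegree = 5 := by
  unfold principalQuintic
  compute_degree!

theorem monic (p q r : R) : (principalQuintic p q r).Monic := by
  unfold principalQuintic
  monicity!

variable {p q r : R} {s : Multiset R}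

theorem card_eq_five [Nontrivial R]
    (hs : (s.map fun z => X - C z).prod = principalQuintic p q r) : s.card = 5 := by
  rw [← natDegree_multiset_prod_X_sub_C_eq_card s, hs, natDegree_eq_five]

theorem evalSum_one_eq_five (hs : (s.map fun z => X - C z).prod = principalQuintic p q r) :
    evalSum s 1 = 5 := by
  nontriviality R
  simp [evalSum_one, card_eq_five hs]

theorem natCast_mul_coeff_eq_neg_sum
    (hs : (s.map fun z => X - C z).prod = principalQuintic p q r) {k : ℕ} (hk : k ≤ 5) :
    k * (principalQuintic p q r).coeff (5 - k) = -∑ i ∈ Finset.range k,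
      (principalQuintic p q r).coeff (5 - i) * evalSum s (X ^ (k - i)) := by
  nontriviality R
  have hcard := card_eq_five hs
  simpa only [hs, hcard] using
    natCast_mul_coeff_prod_X_sub_C_eq_neg_sum s (hk.trans_eq hcard.symm)

theorem evalSum_X (hs : (s.map fun z => X - C z).prod = principalQuintic p q r) :
    evalSum s X = 0 := by
  simpa [principalQuintic, coeff_X, coeff_C] using
    natCast_mul_coeff_eq_neg_sum hs (k := 1) (by norm_num)

theorem evalSum_X_pow_two (hs : (s.map fun z => X - C z).prod = principalQuintic p q r) :
    evalSum s (X ^ 2) = 0 := by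
  simpa [Finset.sum_range_succ, principalQuintic, coeff_X, coeff_C] using
    natCast_mul_coeff_eq_neg_sum hs (k := 2) (by norm_num)

theorem evalSum_X_pow_three (hs : (s.map fun z => X - C z).prod = principalQuintic p q r) :
    evalSum s (X ^ 3) = -3 * p := by
  have newton : 3 * p = -evalSum s (X ^ 3) := by
    simpa [Finset.sum_range_succ, principalQuintic, coeff_X, coeff_C] using
      natCast_mul_coeff_eq_neg_sum hs (k := 3) (by norm_num)
  linear_combination newton

theorem evalSum_X_pow_four (hs : (s.map fun z => X - C z).prod = principalQuintic p q r) :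
    evalSum s (X ^ 4) = -4 * q := by
  have newton : 4 * q = -evalSum s (X ^ 4) := by
    simpa [Finset.sum_range_succ, principalQuintic, coeff_X, coeff_C, evalSum_X hs] using
      natCast_mul_coeff_eq_neg_sum hs (k := 4) (by norm_num)
  linear_combination newton

theorem evalSum_X_pow_add_five (hs : (s.map fun z => X - C z).prod = principalQuintic p q r)
    (m : ℕ) :
    evalSum s (X ^ (m + 5)) = -(p * evalSum s (X ^ (m + 2)) + q * evalSum s (X ^ (m + 1)) +
      r * evalSum s (X ^ m)) := by
  have expand : principalQuintic p q r * X ^ m =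
      X ^ (m + 5) + p • X ^ (m + 2) + q • X ^ (m + 1) + r • X ^ m := by
    simp only [principalQuintic, smul_eq_C_mul]
    ring
  have vanishing := evalSum_prod_X_sub_C_mul s (X ^ m)
  simp only [hs, expand, map_add, map_smul, smul_eq_mul] at vanishing
  linear_combination vanishing

theorem evalSum_X_pow_five (hs : (s.map fun z => X - C z).prod = principalQuintic p q r) :
    evalSum s (X ^ 5) = -5 * r := by
  have h := evalSum_X_pow_add_five hs 0
  simp only [zero_add, pow_zero, pow_one, evalSum_one_eq_five hs, evalSum_X hs,
    evalSum_X_pow_two hs] at h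
  linear_combination h

theorem evalSum_X_pow_six (hs : (s.map fun z => X - C z).prod = principalQuintic p q r) :
    evalSum s (X ^ 6) = 3 * p ^ 2 := by
  have h := evalSum_X_pow_add_five hs 1
  simp only [Nat.reduceAdd, pow_one, evalSum_X hs, evalSum_X_pow_two hs,
    evalSum_X_pow_three hs] at h
  linear_combination h

theorem evalSum_X_pow_seven (hs : (s.map fun z => X - C z).prod = principalQuintic p q r) :
    evalSum s (X ^ 7) = 7 * p * q := by
  have h := evalSum_X_pow_add_five hs 2
  simp only [Nat.reduceAdd, evalSum_X_pow_two hs, evalSum_X_pow_three hs,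
    evalSum_X_pow_four hs] at h
  linear_combination h

theorem evalSum_X_pow_eight (hs : (s.map fun z => X - C z).prod = principalQuintic p q r) :
    evalSum s (X ^ 8) = 8 * p * r + 4 * q ^ 2 := by
  have h := evalSum_X_pow_add_five hs 3
  simp only [Nat.reduceAdd, evalSum_X_pow_three hs, evalSum_X_pow_four hs,
    evalSum_X_pow_five hs] at h
  linear_combination h

end principalQuintic

/-- The polynomial `X⁴ + dX³ + cX² + bX + a` of the quartic subsidiary equation. -/
noncomputable def subsidiaryQuartic {R : Type*} [CommRing R] (a b c d : R) : R[X] :=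
  X ^ 4 + C d * X ^ 3 + C c * X ^ 2 + C b * X + C a

theorem bringQuinticTransform_eq_tschirnhausTransform (a b c d z₁ z₂ z₃ z₄ z₅ : ℂ) :
    bringQuinticTransform a b c d z₁ z₂ z₃ z₄ z₅ =
      tschirnhausTransform {z₁, z₂, z₃, z₄, z₅} (subsidiaryQuartic a b c d) := by
  simp [bringQuinticTransform, tschirnhausTransform, subsidiaryQuartic, mul_assoc]

section SubsidiaryQuartic

variable {R : Type*} [CommRing R] {p q r : R} {s : Multiset R}

open principalQuintic

theorem evalSum_subsidiaryQuartic
    (hs : (s.map fun z => X - C z).prod = principalQuintic p q r) (a b c d : R) :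
    evalSum s (subsidiaryQuartic a b c d) = 5 * a - (3 * p * d + 4 * q) := by
  have expand : subsidiaryQuartic a b c d = X ^ 4 + d • X ^ 3 + c • X ^ 2 + b • X + a • 1 := by
    simp only [subsidiaryQuartic, smul_eq_C_mul, mul_one]
  simp only [expand, map_add, map_smul, smul_eq_mul, evalSum_one_eq_five hs, evalSum_X hs,
    evalSum_X_pow_two hs, evalSum_X_pow_three hs, evalSum_X_pow_four hs]
  ring

theorem evalSum_subsidiaryQuartic_sq
    (hs : (s.map fun z => X - C z).prod = principalQuintic p q r) (a b c d : R) :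
    evalSum s (subsidiaryQuartic a b c d ^ 2) =
      8 * p * r + 4 * q ^ 2 + 14 * p * q * d + 3 * p ^ 2 * (d ^ 2 + 2 * c) -
        10 * r * (b + c * d) - 4 * q * (c ^ 2 + 2 * b * d + 2 * a) - 6 * p * (b * c + a * d) +
        5 * a ^ 2 := by
  have expand : subsidiaryQuartic a b c d ^ 2 =
      X ^ 8 + (2 * d) • X ^ 7 + (d ^ 2 + 2 * c) • X ^ 6 + (2 * b + 2 * c * d) • X ^ 5 +
        (c ^ 2 + 2 * b * d + 2 * a) • X ^ 4 + (2 * b * c + 2 * a * d) • X ^ 3 +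
        (b ^ 2 + 2 * a * c) • X ^ 2 + (2 * a * b) • X + a ^ 2 • 1 := by
    simp only [subsidiaryQuartic, smul_eq_C_mul, map_add, map_mul, map_pow, map_ofNat]
    ring
  simp only [expand, map_add, map_smul, smul_eq_mul, evalSum_one_eq_five hs, evalSum_X hs,
    evalSum_X_pow_two hs, evalSum_X_pow_three hs, evalSum_X_pow_four hs, evalSum_X_pow_five hs,
    evalSum_X_pow_six hs, evalSum_X_pow_seven hs, evalSum_X_pow_eight hs]
  ring

theorem ten_mul_coeff_three_tschirnhausTransform
    (hs : (s.map fun z => X - C z).prod = principalQuintic p q r) {a d : R}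
    (ha : 5 * a = 3 * p * d + 4 * q) (α ζ γ : R) :
    10 * (tschirnhausTransform s (subsidiaryQuartic a (α * d + ζ) (d + γ) d)).coeff 3 =
      2 * (((15 * p + 20 * q) * α - (3 * p ^ 2 - 10 * q - 25 * r)) * d ^ 2 +
        ((15 * p + 20 * q) * ζ + (15 * p * α + 20 * q + 25 * r) * γ -
          (-25 * r * α + 15 * p ^ 2 + 23 * p * q)) * d +
        (10 * q * γ ^ 2 + (15 * p * ζ - 15 * p ^ 2) * γ + 25 * r * ζ -
          2 * q ^ 2 - 20 * r * p)) := by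
  nontriviality R
  have hsum : evalSum s (subsidiaryQuartic a (α * d + ζ) (d + γ) d) = 0 := by
    rw [evalSum_subsidiaryQuartic hs, ha, sub_self]
  have hcoeff := two_mul_coeff_tschirnhausTransform (card_eq_five hs)
    (subsidiaryQuartic a (α * d + ζ) (d + γ) d)
  rw [hsum, evalSum_subsidiaryQuartic_sq hs] at hcoeff
  linear_combination 5 * hcoeff + (3 * p * d + 4 * q - 5 * a) * ha

end SubsidiaryQuartic

theorem bring_quintic_remove_third_term_general {R : Type*} [CommRing R]
    (h10 : IsLeftRegular (10 : R)) {p q r α ζ γ : R}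
    (hα : (15 * p + 20 * q) * α = 3 * p ^ 2 - 10 * q - 25 * r)
    (hlin : (15 * p + 20 * q) * ζ + (15 * p * α + 20 * q + 25 * r) * γ =
      -25 * r * α + 15 * p ^ 2 + 23 * p * q)
    (hquad : 10 * q * γ ^ 2 + (15 * p * ζ - 15 * p ^ 2) * γ + 25 * r * ζ -
      2 * q ^ 2 - 20 * r * p = 0)
    {s : Multiset R} (hs : (s.map fun z => X - C z).prod = principalQuintic p q r)
    {a d : R} (ha : 5 * a = 3 * p * d + 4 * q) :
    (tschirnhausTransform s (subsidiaryQuartic a (α * d + ζ) (d + γ) d)).coeff 3 = 0 := by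
  apply h10
  linear_combination ten_mul_coeff_three_tschirnhausTransform hs ha α ζ γ +
    2 * d ^ 2 * hα + 2 * d * hlin + 2 * hquad

/-- Bring §XI: with `α = (3p² − 10q − 25r)/(15p + 20q)` and `ζ, γ` chosen to
satisfy a linear and a quadratic relation, for every `d`, taking
`a = (3pd + 4q)/5`, `b = αd + ζ`, `c = d + γ`, the coefficient of `Y³` in
the quartic Tschirnhaus transform of `X⁵ + pX² + qX + r` vanishes. -/
theorem bring_quintic_remove_third_term (p q r : ℂ)
    (hden : 15 * p + 20 * q ≠ 0) (α : ℂ)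
    (hα : α = (3 * p ^ 2 - 10 * q - 25 * r) / (15 * p + 20 * q)) (ζ γ : ℂ)
    (hlin : (15 * p + 20 * q) * ζ + (15 * p * α + 20 * q + 25 * r) * γ =
      -25 * r * α + 15 * p ^ 2 + 23 * p * q)
    (hquad : 10 * q * γ ^ 2 + (15 * p * ζ - 15 * p ^ 2) * γ + 25 * r * ζ -
      2 * q ^ 2 - 20 * r * p = 0)
    (z₁ z₂ z₃ z₄ z₅ : ℂ)
    (hroots : (X ^ 5 + C p * X ^ 2 + C q * X + C r).roots =
      {z₁, z₂, z₃, z₄, z₅}) :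
    ∀ d : ℂ,
      (bringQuinticTransform ((3 * p * d + 4 * q) / 5) (α * d + ζ) (d + γ) d
        z₁ z₂ z₃ z₄ z₅).coeff 3 = 0 := by
  intro d
  have hprod := (IsAlgClosed.splits (principalQuintic p q r)).eq_prod_roots_of_monic
    (principalQuintic.monic p q r)
  rw [bringQuinticTransform_eq_tschirnhausTransform, ← hroots]
  exact bring_quintic_remove_third_term_general (IsRegular.of_ne_zero (by norm_num)).left
    (hα ▸ mul_div_cancel₀ _ hden) hlin hquad hprod.symm (by ring)
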